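/- At every point p ∈ Ω one has [Y_{12}, X_2](p) = Z_1(p), and [X_1, Y_{1k}](p) = Z_k(p) for every 2 ≤ k ≤ n. -/

import Mathlib

open scoped InnerProductSpace BigOperators

noncomputable section

/-- `s_j(x) = ∑_{r=j}^n x_r²`. -/
def sfun (n j : ℕ) (x : EuclideanSpace ℝ (Fin (n + 1))) : ℝ :=
  ∑ r : Fin (n + 1), if j ≤ (r : ℕ) then x r ^ 2 else 0

/-- The `j`-th coordinate of `x` (read as a natural-number index, `0` out of range). -/
def coordfun (n : ℕ) (x : EuclideanSpace ℝ (Fin (n + 1))) (j : ℕ) : ℝ :=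
  if h : j < n + 1 then x ⟨j, h⟩ else 0

/-- The vector field `e_j(x) = √(s_j/s_{j-1}) ( −∂_{j−1} + (x_{j−1}/s_j) Σ_{r=j}^n x_r ∂_r )`. -/
def efun (n j : ℕ) (x : EuclideanSpace ℝ (Fin (n + 1))) : EuclideanSpace ℝ (Fin (n + 1)) :=
  WithLp.toLp 2 fun r => Real.sqrt (sfun n j x / sfun n (j - 1) x) *
    (-(if (r : ℕ) = j - 1 then 1 else 0)
      + coordfun n x (j - 1) / sfun n j x * (if j ≤ (r : ℕ) then x r else 0))

/-- `U = {x ∈ ℝ^{n+1} : x_n > 0}`. -/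
def Usph (n : ℕ) : Set (EuclideanSpace ℝ (Fin (n + 1))) := {x | 0 < coordfun n x n}

/-- The unit sphere `S^n ⊂ ℝ^{n+1}`. -/
def sph (n : ℕ) : Set (EuclideanSpace ℝ (Fin (n + 1))) :=
  {x | ∑ r : Fin (n + 1), x r ^ 2 = 1}

attribute [local instance] Matrix.normedAddCommGroup Matrix.normedSpace

/-- The ambient space of the trivialized configuration space
`Ω = U × ℝ^n × M_n(ℝ) ⊂ ℝ^{n+1} × ℝ^n × M_n(ℝ)`. -/
abbrev Conf (n : ℕ) :=
  EuclideanSpace ℝ (Fin (n + 1)) × EuclideanSpace ℝ (Fin n) × Matrix (Fin n) (Fin n) ℝ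

/-- The elementary matrix `E_{ik}` with `1`-based indices `i, k`. -/
def Emat (n i k : ℕ) : Matrix (Fin n) (Fin n) ℝ :=
  Matrix.of fun a b => if (a : ℕ) + 1 = i ∧ (b : ℕ) + 1 = k then 1 else 0

/-- The standard basis vector `ε_k` of `ℝ^n`, with a `1`-based index `k`. -/
def eps (n k : ℕ) : EuclideanSpace ℝ (Fin n) :=
  WithLp.toLp 2 fun i => if (i : ℕ) + 1 = k then 1 else 0

/-- The rolling vector field
`X_k(x, x̂, A) = (e_k(x), A ε_k, −Σ_{i=1}^{k−1} (x_{i−1}/√(s_{i−1} s_i)) A (E_{ik} − E_{ki}))`. -/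
def Xfield (n k : ℕ) : Conf n → Conf n := fun p =>
  (efun n k p.1, WithLp.toLp 2 (p.2.2.mulVec (WithLp.ofLp (eps n k))),
    -∑ i ∈ Finset.Icc 1 (k - 1),
      (coordfun n p.1 (i - 1) / Real.sqrt (sfun n (i - 1) p.1 * sfun n i p.1)) •
        (p.2.2 * (Emat n i k - Emat n k i)))

/-- `Y_{lk}(x, x̂, A) = (0, 0, A(E_{lk} − E_{kl}))`. -/
def Yfield (n l k : ℕ) : Conf n → Conf n := fun p =>
  (0, 0, p.2.2 * (Emat n l k - Emat n k l))

/-- `Z_k(x, x̂, A) = (0, A ε_k, 0)`. -/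
def Zfield (n k : ℕ) : Conf n → Conf n := fun p =>
  (0, WithLp.toLp 2 (p.2.2.mulVec (WithLp.ofLp (eps n k))), 0)

/-!
All the fields involved have the form `(e(x), A v(x), A Ω(x))`, which is stable under brackets: the
frame `A` contributes the algebraic terms `A (Ω v' − Ω' v)` and `A [Ω, Ω']`. Since `Y_{ij}` is the
field with `e = v = 0` and `Ω = W_{ij} = E_{ij} − E_{ji}` constant, its bracket with
`X_k = (e_k, A ε_k, A Ω_k)` is `(0, A W_{ij} ε_k, A [W_{ij}, Ω_k])`. Now `Ω_1 = 0` and `Ω_2` is a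
multiple of `W_{12}`, so the matrix terms vanish, and what remains is `W_{12} ε_2 = ε_1` and
`W_{1k} ε_1 = −ε_k`.
-/

section LeftInvariantField

open VectorField

variable {E m : Type*} [NormedAddCommGroup E] [NormedSpace ℝ E] [Fintype m] [DecidableEq m]

/-- The vector field `(x, y, A) ↦ (e(x), A v(x), A Ω(x))` on `E × ℝᵐ × M_m(ℝ)`. These are the fields
invariant under the left action `(x, y, A) ↦ (x, g y + b, g A)` of the affine group; the fields
`X_k`, `Y_{lk}` and `Z_k` all have this form. -/
def leftInvariantField (e : E → E) (v : E → EuclideanSpace ℝ m) (Ω : E → Matrix m m ℝ) :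
    E × EuclideanSpace ℝ m × Matrix m m ℝ → E × EuclideanSpace ℝ m × Matrix m m ℝ :=
  fun p => (e p.1, p.2.2.toEuclideanLin (v p.1), p.2.2 * Ω p.1)

theorem fderiv_leftInvariantField {e : E → E} {v : E → EuclideanSpace ℝ m} {Ω : E → Matrix m m ℝ}
    {p : E × EuclideanSpace ℝ m × Matrix m m ℝ} (he : DifferentiableAt ℝ e p.1)
    (hv : DifferentiableAt ℝ v p.1) (hΩ : DifferentiableAt ℝ Ω p.1)
    (q : E × EuclideanSpace ℝ m × Matrix m m ℝ) :
    fderiv ℝ (leftInvariantField e v Ω) p q =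
      (fderiv ℝ e p.1 q.1,
        p.2.2.toEuclideanLin (fderiv ℝ v p.1 q.1) + q.2.2.toEuclideanLin (v p.1),
        p.2.2 * fderiv ℝ Ω p.1 q.1 + q.2.2 * Ω p.1) := by
  let act := (Matrix.toEuclideanLin (𝕜 := ℝ) (m := m) (n := m)).toLinearMap.toContinuousBilinearMap
  let mul := (LinearMap.mul ℝ (Matrix m m ℝ)).toContinuousBilinearMap
  have hx : HasFDerivAt Prod.fst _ p := hasFDerivAt_fst (𝕜 := ℝ)
  have hA : HasFDerivAt (fun r : E × EuclideanSpace ℝ m × Matrix m m ℝ => r.2.2) _ p :=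
    (hasFDerivAt_snd (𝕜 := ℝ)).comp p hasFDerivAt_snd
  have h := (he.hasFDerivAt.comp p hx).prodMk
    ((act.hasFDerivAt_of_bilinear hA (hv.hasFDerivAt.comp p hx)).prodMk
      (mul.hasFDerivAt_of_bilinear hA (hΩ.hasFDerivAt.comp p hx)))
  exact congrArg (· q) h.fderiv

theorem lieBracket_leftInvariantField {e e' : E → E} {v v' : E → EuclideanSpace ℝ m}
    {Ω Ω' : E → Matrix m m ℝ} {p : E × EuclideanSpace ℝ m × Matrix m m ℝ}
    (he : DifferentiableAt ℝ e p.1) (hv : DifferentiableAt ℝ v p.1)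
    (hΩ : DifferentiableAt ℝ Ω p.1) (he' : DifferentiableAt ℝ e' p.1)
    (hv' : DifferentiableAt ℝ v' p.1) (hΩ' : DifferentiableAt ℝ Ω' p.1) :
    lieBracket ℝ (leftInvariantField e v Ω) (leftInvariantField e' v' Ω') p =
      leftInvariantField (lieBracket ℝ e e')
        (fun x => (Ω x).toEuclideanLin (v' x) - (Ω' x).toEuclideanLin (v x)
          + (fderiv ℝ v' x (e x) - fderiv ℝ v x (e' x)))
        (fun x => ⁅Ω x, Ω' x⁆ + (fderiv ℝ Ω' x (e x) - fderiv ℝ Ω x (e' x))) p := by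
  refine (congrArg₂ (· - ·) (fderiv_leftInvariantField he' hv' hΩ' _)
    (fderiv_leftInvariantField he hv hΩ _)).trans ?_
  refine Prod.ext rfl (Prod.ext ?_ ?_)
  · simp only [leftInvariantField, Prod.snd_sub, Prod.fst_sub, map_add, map_sub,
      Matrix.toLpLin_mul_same, LinearMap.comp_apply]
    abel
  · simp only [leftInvariantField, Prod.snd_sub, Ring.lie_def, mul_add, mul_sub, mul_assoc]
    abel

end LeftInvariantField

section RotationGenerator

variable {n : ℕ}

theorem eps_eq_single {k : ℕ} (hk : 1 ≤ k) (hkn : k ≤ n) :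
    eps n k = EuclideanSpace.single ⟨k - 1, by omega⟩ 1 := by
  ext a
  have ha : (a : ℕ) + 1 = k ↔ a = ⟨k - 1, by omega⟩ := by
    simp only [Fin.ext_iff]
    omega
  simp [eps, ha]

theorem toEuclideanLin_Emat_eps {k : ℕ} (hk : 1 ≤ k) (hkn : k ≤ n) (i j : ℕ) :
    (Emat n i j).toEuclideanLin (eps n k) = if j = k then eps n i else 0 := by
  ext a
  have hentry : (Emat n i j).toEuclideanLin (eps n k) a = Emat n i j a ⟨k - 1, by omega⟩ := by
    simp [eps_eq_single hk hkn]
  rw [hentry]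
  by_cases hjk : j = k <;> simp [Emat, eps, Nat.sub_add_cancel hk, hjk, eq_comm]

/-- The infinitesimal rotation `E_{lk} − E_{kl}` in the plane of `ε_l` and `ε_k`, with `1`-based
indices. -/
def rotationGenerator (n l k : ℕ) : Matrix (Fin n) (Fin n) ℝ :=
  Emat n l k - Emat n k l

theorem neg_rotationGenerator (l k : ℕ) : -rotationGenerator n l k = rotationGenerator n k l :=
  neg_sub _ _

theorem toEuclideanLin_rotationGenerator_eps {l k : ℕ} (hlk : l ≠ k) (hk : 1 ≤ k) (hkn : k ≤ n) :
    (rotationGenerator n l k).toEuclideanLin (eps n k) = eps n l := by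
  simp [rotationGenerator, toEuclideanLin_Emat_eps hk hkn, hlk]

end RotationGenerator

section Coordinates

variable {n : ℕ} {x : EuclideanSpace ℝ (Fin (n + 1))}

theorem antitone_sfun (x : EuclideanSpace ℝ (Fin (n + 1))) : Antitone fun j => sfun n j x := by
  intro i j hij
  refine Finset.sum_le_sum fun r _ => ?_
  split_ifs with hjr hir
  · exact le_rfl
  · exact absurd (hij.trans hjr) hir
  · positivity
  · exact le_rfl

theorem sfun_pos_of_mem_Usph (hx : x ∈ Usph n) {j : ℕ} (hj : j ≤ n) : 0 < sfun n j x := by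
  have hxn : 0 < x (Fin.last n) := by simpa [Usph, coordfun, Fin.last] using hx
  refine Finset.sum_pos' (fun r _ => by split_ifs <;> positivity)
    ⟨Fin.last n, Finset.mem_univ _, ?_⟩
  simpa [hj] using pow_pos hxn 2

theorem differentiable_sfun (n j : ℕ) : Differentiable ℝ (sfun n j) := by
  refine Differentiable.fun_sum fun r _ => ?_
  split_ifs <;> fun_prop

theorem differentiable_coordfun (n j : ℕ) : Differentiable ℝ fun x => coordfun n x j := by
  unfold coordfun
  split_ifs <;> fun_prop

theorem differentiableAt_efun {k : ℕ} (hk : 0 < sfun n k x) :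
    DifferentiableAt ℝ (efun n k) x := by
  have hk' : 0 < sfun n (k - 1) x := hk.trans_le (antitone_sfun x (k.sub_le 1))
  have hs := (differentiable_sfun n k).differentiableAt (x := x)
  have hs' := (differentiable_sfun n (k - 1)).differentiableAt (x := x)
  have hc := (differentiable_coordfun n (k - 1)).differentiableAt (x := x)
  refine (differentiableAt_euclidean (𝕜 := ℝ)).mpr fun r => ?_
  have hr : DifferentiableAt ℝ
      (fun y : EuclideanSpace ℝ (Fin (n + 1)) => if k ≤ (r : ℕ) then y r else 0) x := by
    split_ifs <;> fun_prop
  simp only [efun]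
  fun_prop (disch := positivity)

end Coordinates

section RollingFields

open VectorField

variable {n : ℕ}

/-- The matrix `Ω_k(x) = −Σ_{i=1}^{k−1} (x_{i−1}/√(s_{i−1} s_i)) (E_{ik} − E_{ki})` for which the
last component of `X_k` is `A Ω_k(x)`. -/
def rollingConnection (n k : ℕ) (x : EuclideanSpace ℝ (Fin (n + 1))) : Matrix (Fin n) (Fin n) ℝ :=
  -∑ i ∈ Finset.Icc 1 (k - 1),
    (coordfun n x (i - 1) / Real.sqrt (sfun n (i - 1) x * sfun n i x)) • rotationGenerator n i k

theorem differentiableAt_rollingConnection {k : ℕ} {x : EuclideanSpace ℝ (Fin (n + 1))}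
    (hk : 0 < sfun n (k - 1) x) : DifferentiableAt ℝ (rollingConnection n k) x := by
  refine (DifferentiableAt.fun_sum fun i hi => ?_).neg
  have hsi : 0 < sfun n i x := hk.trans_le (antitone_sfun x (Finset.mem_Icc.mp hi).2)
  have hsi_pred : 0 < sfun n (i - 1) x := hsi.trans_le (antitone_sfun x (i.sub_le 1))
  have hs := (differentiable_sfun n i).differentiableAt (x := x)
  have hs' := (differentiable_sfun n (i - 1)).differentiableAt (x := x)
  have hc := (differentiable_coordfun n (i - 1)).differentiableAt (x := x)
  fun_prop (disch := positivity)

theorem rollingConnection_one : rollingConnection n 1 = 0 := by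
  ext1 x
  simp [rollingConnection]

theorem lie_rotationGenerator_rollingConnection_two (x : EuclideanSpace ℝ (Fin (n + 1))) :
    ⁅rotationGenerator n 1 2, rollingConnection n 2 x⁆ = 0 := by
  simp [rollingConnection, Ring.lie_def]

theorem Xfield_eq_leftInvariantField (k : ℕ) :
    Xfield n k = leftInvariantField (efun n k) (fun _ => eps n k) (rollingConnection n k) := by
  ext1 p
  simp only [Xfield, leftInvariantField, rollingConnection, rotationGenerator, Matrix.mul_neg,
    Matrix.mul_sum, Matrix.mul_smul, Matrix.toLpLin_apply]

theorem Yfield_eq_leftInvariantField (l k : ℕ) :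
    Yfield n l k = leftInvariantField 0 0 (fun _ => rotationGenerator n l k) := by
  ext1 p
  simp only [Yfield, leftInvariantField, Pi.zero_apply, map_zero, rotationGenerator]

theorem Zfield_eq_leftInvariantField (k : ℕ) :
    Zfield n k = leftInvariantField 0 (fun _ => eps n k) 0 := by
  ext1 p
  simp only [Zfield, leftInvariantField, Pi.zero_apply, mul_zero, Matrix.toLpLin_apply]

theorem lieBracket_Yfield_Xfield {k : ℕ} {p : Conf n} (hk : 0 < sfun n k p.1) (i j : ℕ) :
    lieBracket ℝ (Yfield n i j) (Xfield n k) p =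
      leftInvariantField 0 (fun _ => (rotationGenerator n i j).toEuclideanLin (eps n k))
        (fun x => ⁅rotationGenerator n i j, rollingConnection n k x⁆) p := by
  have hk' : 0 < sfun n (k - 1) p.1 := hk.trans_le (antitone_sfun p.1 (k.sub_le 1))
  rw [Yfield_eq_leftInvariantField, Xfield_eq_leftInvariantField,
    lieBracket_leftInvariantField (differentiableAt_zero _) (differentiableAt_zero _)
      (differentiableAt_const _) (differentiableAt_efun hk) (differentiableAt_const _)
      (differentiableAt_rollingConnection hk')]
  simp [leftInvariantField]

theorem lieBracket_Yfield_one_two_Xfield_two (hn : 2 ≤ n) {p : Conf n} (hp : 0 < sfun n 2 p.1) :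
    lieBracket ℝ (Yfield n 1 2) (Xfield n 2) p = Zfield n 1 p := by
  rw [lieBracket_Yfield_Xfield hp, Zfield_eq_leftInvariantField,
    toEuclideanLin_rotationGenerator_eps (by norm_num) (by norm_num) hn]
  simp only [lie_rotationGenerator_rollingConnection_two, leftInvariantField, Pi.zero_apply]

theorem lieBracket_Xfield_one_Yfield_one {k : ℕ} (hk : 2 ≤ k) (hkn : k ≤ n) {p : Conf n}
    (hp : 0 < sfun n 1 p.1) :
    lieBracket ℝ (Xfield n 1) (Yfield n 1 k) p = Zfield n k p := by
  have hrot : (rotationGenerator n 1 k).toEuclideanLin (eps n 1) = -eps n k := by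
    rw [← neg_rotationGenerator, map_neg, LinearMap.neg_apply,
      toEuclideanLin_rotationGenerator_eps (by omega) le_rfl (by omega)]
  rw [lieBracket_swap, lieBracket_Yfield_Xfield hp, hrot, Zfield_eq_leftInvariantField]
  simp [leftInvariantField, rollingConnection_one, Ring.lie_def]

theorem statement9_general {n : ℕ} (hn : 2 ≤ n) {p : Conf n} (hp : 0 < sfun n 2 p.1) :
    lieBracket ℝ (Yfield n 1 2) (Xfield n 2) p = Zfield n 1 p ∧
    ∀ k : ℕ, 2 ≤ k → k ≤ n → lieBracket ℝ (Xfield n 1) (Yfield n 1 k) p = Zfield n k p :=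
  ⟨lieBracket_Yfield_one_two_Xfield_two hn hp, fun _ hk hkn =>
    lieBracket_Xfield_one_Yfield_one hk hkn (hp.trans_le (antitone_sfun p.1 one_le_two))⟩

end RollingFields

/-- At every point `p ∈ Ω` one has `[Y_{12}, X_2](p) = Z_1(p)`, and
`[X_1, Y_{1k}](p) = Z_k(p)` for every `2 ≤ k ≤ n`. -/
theorem statement9 (n : ℕ) (hn : 2 ≤ n) (p : Conf n) (hU : p.1 ∈ Usph n) :
    (fderiv ℝ (Xfield n 2) p (Yfield n 1 2 p) - fderiv ℝ (Yfield n 1 2) p (Xfield n 2 p)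
      = Zfield n 1 p) ∧
    (∀ k : ℕ, 2 ≤ k → k ≤ n →
      fderiv ℝ (Yfield n 1 k) p (Xfield n 1 p) - fderiv ℝ (Xfield n 1) p (Yfield n 1 k p)
        = Zfield n k p) :=
  statement9_general hn (sfun_pos_of_mem_Usph hU hn)
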